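/- For each u ∈ ℂ with |u| ≤ u_c, the function Z_u(v) := Σ_{q≥0} (Σ_{p≥0} z_{p,q}·u^p)·v^q extends analytically to a slit disk at u_c, and there exist complex constants α(u), β(u) such that, as v → u_c within this slit disk, Z_u(v) = α(u) − β(u)·(u_c − v) + A(u)·(1 − v/u_c)^{4/3} + O((1 − v/u_c)^{5/3}), where the fractional powers are taken with the principal branch and A(u) = Σ_{p≥0} a_p·u^p. -/

import Mathlib

noncomputable def nuc : ℝ := 1 + 2 * Real.sqrt 7

noncomputable def tc : ℝ := Real.sqrt 10 / (8 * (7 + Real.sqrt 7) ^ ((3:ℝ)/2))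

noncomputable def uc : ℝ := (6/5) * (7 + Real.sqrt 7) * tc

/-- The rational parametrization `û` of the `u`-variable. -/
noncomputable def uhat (H : ℂ) : ℂ :=
  ((uc : ℂ) / 3) * H * (10 - 12 * H + 6 * H ^ 2 - H ^ 3)

/-- The rational parametrization `Ẑ₀`. -/
noncomputable def Z0hat (H : ℂ) : ℂ :=
  (1/10) * (1 - (1 - (Real.sqrt 7 : ℂ)) * H + 3 * H ^ 2 - H ^ 3)
    * (10 - 12 * H + 6 * H ^ 2 - H ^ 3)

/-- The rational parametrization `Ẑ₁`. -/
noncomputable def Z1hat (H : ℂ) : ℂ :=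
  (3 / (10 * (uc : ℂ))) *
    ((Real.sqrt 7 : ℂ) - 1 + H - 3 * (4 - 3 * H + H ^ 2) / (10 - 12 * H + 6 * H ^ 2 - H ^ 3))

/-- The rational parametrization `Â`. -/
noncomputable def Ahat (H : ℂ) : ℂ :=
  (1/10) * ((((3:ℝ)/2) ^ ((7:ℝ)/3) : ℝ) : ℂ) * (9 - 8 * H + 3 * H ^ 2) / (3 - 3 * H + H ^ 2) ^ 2

/-- The slit disk at `x > 0` of margin `ε > 0`. -/
def slitDisk (x ε : ℝ) : Set ℂ :=
  Metric.ball (0 : ℂ) (x + ε) \ (Complex.ofReal '' Set.Icc x (x + ε))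

/-!
In the coordinate `h = 1 - H` the map `û` becomes `u_c (1 - h³(2 + h)/3)`. The critical values `0`
and `-9/16` of the quartic `h³(2 + h)/3` lie off the slit plane `ℂ \ (-∞, 0]`, so over that simply
connected domain the quartic has an inverse branch, and `û⁻¹` continues to every slit disk at `u_c`.
The kernel of the equation for `Z` shares a polynomial factor with its right-hand side; after
cancelling it, `Z` is a rational function `Zhat` of the two shifted coordinates. The branch maps the
disk `|u| < u_c` into the sector of half-angle `π/6`, where the denominator of `Zhat` cannot vanish,
and nonnegativity of the coefficients turns this regularity into convergence of the double series on
the whole disk. The exponent `4/3` arises because, with `y = 1 - v/u_c` and `k` the coordinate of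
`v`, one has `k³(2 + k)/3 = y`: at `k = 0` the function `Zhat h` has a constant term, a multiple of
`y`, and then a multiple of `k⁴ ∼ (3y/2)^{4/3}`.
-/

open Filter Topology

theorem exists_continuousOn_eval_rightInverse (p : Polynomial ℂ) {U : Set ℂ} {a e : ℂ}
    (hU : IsOpen U) (hstar : StarConvex ℝ a U) (ha : a ∈ U) (he : p.eval e = a)
    (hcrit : ∀ x, p.derivative.eval x = 0 → p.eval x ∉ U) :
    ∃ κ : ℂ → ℂ, ContinuousOn κ U ∧ (∀ y ∈ U, p.eval (κ y) = y) ∧ κ a = e := by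
  classical
  have hcov : IsCoveringMapOn p.eval U := p.isCoveringMapOn_eval.mono fun y hy => by
    rintro ⟨x, hx, rfl⟩
    exact hcrit x hx hy
  have := hstar.contractibleSpace ⟨a, ha⟩
  have := hU.locallyPathConnectedSpace
  obtain ⟨f, ⟨hfa, hf⟩, -⟩ := hcov.existsUnique_continuousMap_lifts (A := U)
    ⟨Subtype.val, continuous_subtype_val⟩ (a₀ := ⟨a, ha⟩) (e₀ := e) he fun y => y.2
  refine ⟨fun y => if hy : y ∈ U then f ⟨y, hy⟩ else 0, ?_, fun y hy => ?_, ?_⟩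
  · rw [continuousOn_iff_continuous_domRestrict]
    convert! map_continuous f
    ext y
    simp
  · simpa [hy] using congrFun hf ⟨y, hy⟩
  · simpa [ha] using hfa

theorem eqOn_of_pow_eqOn {X 𝕜 : Type*} [TopologicalSpace X] [Field 𝕜] [TopologicalSpace 𝕜]
    [T1Space 𝕜] [ContinuousMul 𝕜] [ContinuousInv₀ 𝕜] {s : Set X} {f g : X → 𝕜} {n : ℕ} {a : X}
    (hs : IsPreconnected s) (hf : ContinuousOn f s) (hg : ContinuousOn g s) (hn : 0 < n)
    (hpow : Set.EqOn (f ^ n) (g ^ n) s) (hg0 : ∀ x ∈ s, g x ≠ 0) (ha : a ∈ s)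
    (hfg : f a = g a) : Set.EqOn f g s := by
  intro x hx
  have hroots : Set.MapsTo (f / g) s (Polynomial.nthRootsFinset n (1 : 𝕜)) := fun y hy => by
    have hy' : f y ^ n = g y ^ n := hpow hy
    simp [Polynomial.mem_nthRootsFinset hn, div_pow, hy', hg0 y hy]
  have hconst := hs.constant_of_mapsTo (Finset.finite_toSet _).isDiscrete (hf.div hg hg0) hroots
    hx ha
  rw [Pi.div_apply, Pi.div_apply, hfg, div_self (hg0 a ha)] at hconst
  exact (div_eq_one_iff_eq (hg0 x hx)).mp hconst

section PowerSeries

theorem hasFPowerSeriesAt_ofScalars {𝕜 : Type*} [NontriviallyNormedField 𝕜] {f : 𝕜 → 𝕜}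
    {c : ℕ → 𝕜} (hc : ∀ᶠ w in 𝓝 (0 : 𝕜), HasSum (fun n => c n * w ^ n) (f w)) :
    HasFPowerSeriesAt f (FormalMultilinearSeries.ofScalars 𝕜 c) 0 := by
  rw [hasFPowerSeriesAt_iff]
  filter_upwards [hc] with w hw
  simpa [FormalMultilinearSeries.coeff_ofScalars, mul_comm] using hw

theorem differentiableOn_ball_of_hasSum {f : ℂ → ℂ} {c : ℕ → ℂ} {r : ℝ}
    (hc : ∀ w : ℂ, ‖w‖ < r → HasSum (fun n => c n * w ^ n) (f w)) :
    DifferentiableOn ℂ f (Metric.ball 0 r) := by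
  rcases le_or_gt r 0 with hr | hr
  · simpa only [Metric.ball_eq_empty.mpr hr] using differentiableOn_empty
  have hseries : HasFPowerSeriesOnBall f (FormalMultilinearSeries.ofScalars ℂ c) 0
      (ENNReal.ofReal r) := by
    refine ⟨ENNReal.le_of_forall_nnreal_lt fun s hs => ?_, ENNReal.ofReal_pos.mpr hr, ?_⟩
    · have hs' : ‖((s : ℝ) : ℂ)‖ < r := by
        simpa using (ENNReal.lt_ofReal_iff_toReal_lt ENNReal.coe_ne_top).mp hs
      refine FormalMultilinearSeries.le_radius_of_tendsto _ (l := 0) ?_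
      simpa using (hc _ hs').summable.tendsto_atTop_zero.norm
    · intro w hw
      have hw' : ‖w‖ < r := by rwa [Metric.eball_ofReal, mem_ball_zero_iff] at hw
      simpa [mul_comm] using hc w hw'
  simpa [Metric.eball_ofReal] using hseries.differentiableOn

theorem hasSum_of_differentiableOn_ball {f : ℂ → ℂ} {c : ℕ → ℂ} {R : ℝ}
    (hf : DifferentiableOn ℂ f (Metric.ball 0 R))
    (hc : ∀ᶠ w in 𝓝 (0 : ℂ), HasSum (fun n => c n * w ^ n) (f w)) {w : ℂ} (hw : ‖w‖ < R) :
    HasSum (fun n => c n * w ^ n) (f w) := by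
  have hball : Metric.ball (0 : ℂ) R ∈ 𝓝 0 :=
    Metric.ball_mem_nhds _ ((norm_nonneg w).trans_lt hw)
  have htaylor : ∀ v ∈ Metric.ball (0 : ℂ) R,
      HasSum (fun n => (n.factorial : ℂ)⁻¹ * iteratedDeriv n f 0 * v ^ n) (f v) := fun v hv => by
    simpa [mul_comm, mul_left_comm] using Complex.hasSum_taylorSeries_on_ball hf hv
  have hseries := (hasFPowerSeriesAt_ofScalars hc).eq_formalMultilinearSeries
    (hasFPowerSeriesAt_ofScalars (mem_of_superset hball htaylor))
  have hcoeff : c = fun n => (n.factorial : ℂ)⁻¹ * iteratedDeriv n f 0 := by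
    funext n
    simpa [FormalMultilinearSeries.coeff_ofScalars] using congrArg (fun p => p.coeff n) hseries
  rw [hcoeff]
  exact htaylor w (by simpa using hw)

theorem summable_and_hasSum_fiber {β : Type*} {c : ℕ × β → ℂ} {f : ℂ → ℂ}
    (h : ∀ᶠ w in 𝓝 (0 : ℂ), HasSum (fun i => c i * w ^ i.1) (f w)) :
    (∀ n, Summable fun b => c (n, b)) ∧
      ∀ᶠ w in 𝓝 (0 : ℂ), HasSum (fun n => (∑' b, c (n, b)) * w ^ n) (f w) := by
  obtain ⟨w₀, hw₀, hne⟩ := ((h.filter_mono nhdsWithin_le_nhds).and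
    (self_mem_nhdsWithin : {0}ᶜ ∈ 𝓝[≠] (0 : ℂ))).exists
  have hfiber : ∀ n, Summable fun b => c (n, b) := fun n =>
    (summable_mul_right_iff (pow_ne_zero n hne)).mp (hw₀.summable.prod_factor n)
  refine ⟨hfiber, h.mono fun w hw => ?_⟩
  exact hw.prod_fiberwise fun n => (hfiber n).hasSum.mul_right (w ^ n)

theorem differentiableOn_ball_of_hasSum_prod {β : Type*} {c : ℕ × β → ℂ} {f : ℂ → ℂ} {r : ℝ}
    (hc : ∀ w : ℂ, ‖w‖ < r → HasSum (fun i => c i * w ^ i.1) (f w)) :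
    DifferentiableOn ℂ f (Metric.ball 0 r) := by
  rcases le_or_gt r 0 with hr | hr
  · simpa only [Metric.ball_eq_empty.mpr hr] using differentiableOn_empty
  have hnear : ∀ᶠ w : ℂ in 𝓝 0, ‖w‖ < r :=
    continuous_norm.continuousAt.eventually_lt continuousAt_const (by simpa using hr)
  have hfiber := (summable_and_hasSum_fiber (hnear.mono hc)).1
  exact differentiableOn_ball_of_hasSum fun w hw =>
    (hc w hw).prod_fiberwise fun n => (hfiber n).hasSum.mul_right (w ^ n)

theorem hasSum_of_differentiableOn_ball_of_majorant {β : Type*} {c : ℕ × β → ℂ} {f F : ℂ → ℂ}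
    {R : ℝ} (hf : DifferentiableOn ℂ f (Metric.ball 0 R))
    (hF : DifferentiableOn ℂ F (Metric.ball 0 R))
    (hcf : ∀ᶠ w in 𝓝 (0 : ℂ), HasSum (fun i => c i * w ^ i.1) (f w))
    (hcF : ∀ᶠ w in 𝓝 (0 : ℂ), HasSum (fun i => (‖c i‖ : ℂ) * w ^ i.1) (F w))
    {w : ℂ} (hw : ‖w‖ < R) : HasSum (fun i => c i * w ^ i.1) (f w) := by
  obtain ⟨hfib, hser⟩ := summable_and_hasSum_fiber hcf
  obtain ⟨hfibF, hserF⟩ := summable_and_hasSum_fiber (c := fun i => (‖c i‖ : ℂ)) hcF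
  have hmajorant : Summable fun i : ℕ × β => ‖c i‖ * ‖w‖ ^ i.1 := by
    rw [summable_prod_of_nonneg fun i => by positivity]
    refine ⟨fun n => (Complex.summable_ofReal.mp (hfibF n)).mul_right (‖w‖ ^ n), ?_⟩
    have := (hasSum_of_differentiableOn_ball hF hserF (w := (‖w‖ : ℂ)) (by simpa using hw)).summable
    refine Complex.summable_ofReal.mp (this.congr fun n => ?_)
    simp [tsum_mul_right, Complex.ofReal_tsum]
  have hsum : Summable fun i => c i * w ^ i.1 :=
    .of_norm_bounded hmajorant fun i => by rw [norm_mul, norm_pow]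
  have hiter := hsum.hasSum.prod_fiberwise fun n => (hfib n).hasSum.mul_right (w ^ n)
  exact (hasSum_of_differentiableOn_ball hf hser hw).unique hiter ▸ hsum.hasSum

variable {ι : Type*} {e : ι → ℕ} {R : ℝ}

theorem summable_mul_pow_of_sum_le {c : ι → ℝ} {M : ℝ} (hR : 0 < R) (hc : ∀ i, 0 ≤ c i)
    (hM : ∀ t ∈ Set.Ioo 0 R, ∀ s : Finset ι, ∑ i ∈ s, c i * t ^ e i ≤ M) :
    Summable fun i => c i * R ^ e i := by
  refine summable_of_sum_le (c := M) (fun i => mul_nonneg (hc i) (by positivity)) fun s => ?_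
  have hcont : Continuous fun t : ℝ => ∑ i ∈ s, c i * t ^ e i := by fun_prop
  refine le_of_tendsto ((hcont.tendsto R).mono_left (nhdsWithin_le_nhds (s := Set.Iio R))) ?_
  filter_upwards [Ioo_mem_nhdsLT hR] with t ht using hM t ht s

theorem summable_mul_pow_of_continuousOn {c : ι → ℝ} {F : ℂ → ℂ} (hR : 0 < R)
    (hc : ∀ i, 0 ≤ c i) (hF : ContinuousOn F (Metric.closedBall 0 R))
    (hs : ∀ w : ℂ, ‖w‖ < R → HasSum (fun i => (c i : ℂ) * w ^ e i) (F w)) :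
    Summable fun i => c i * R ^ e i := by
  obtain ⟨M, hM⟩ := (isCompact_closedBall (0 : ℂ) R).exists_bound_of_continuousOn hF
  refine summable_mul_pow_of_sum_le (M := M) hR hc fun t ht s => ?_
  have hnorm : ‖(t : ℂ)‖ = t := Complex.norm_of_nonneg ht.1.le
  have hre : HasSum (fun i => c i * t ^ e i) (F t).re :=
    (Complex.reCLM.hasSum (hs t (hnorm.trans_lt ht.2))).congr_fun fun i => by
      simp [← Complex.ofReal_pow, ← Complex.ofReal_mul]
  calc ∑ i ∈ s, c i * t ^ e i ≤ (F t).re :=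
        sum_le_hasSum s (fun i _ => mul_nonneg (hc i) (pow_nonneg ht.1.le _)) hre
    _ ≤ ‖F t‖ := Complex.re_le_norm _
    _ ≤ M := hM _ (by simpa using hnorm.trans_le ht.2.le)

theorem hasSum_of_continuousOn_closedBall_of_majorant {c : ι → ℂ} {f F : ℂ → ℂ} (hR : 0 < R)
    (hf : ContinuousOn f (Metric.closedBall 0 R)) (hF : ContinuousOn F (Metric.closedBall 0 R))
    (hcf : ∀ w : ℂ, ‖w‖ < R → HasSum (fun i => c i * w ^ e i) (f w))
    (hcF : ∀ w : ℂ, ‖w‖ < R → HasSum (fun i => (‖c i‖ : ℂ) * w ^ e i) (F w))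
    {w : ℂ} (hw : ‖w‖ ≤ R) : HasSum (fun i => c i * w ^ e i) (f w) := by
  have hsum := summable_mul_pow_of_continuousOn hR (fun i => norm_nonneg (c i)) hF hcF
  have hbound : ∀ i, ∀ v ∈ Metric.closedBall (0 : ℂ) R, ‖c i * v ^ e i‖ ≤ ‖c i‖ * R ^ e i :=
    fun i v hv => by
      rw [norm_mul, norm_pow]
      gcongr
      simpa using hv
  have heq : Set.EqOn (fun v => ∑' i, c i * v ^ e i) f (Metric.closedBall 0 R) :=
    .of_subset_closure (s := Metric.ball 0 R)
      (fun v hv => (hcf v (by simpa using hv)).tsum_eq)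
      (continuousOn_tsum (fun i => by fun_prop) hsum hbound) hf Metric.ball_subset_closedBall
      (closure_ball (0 : ℂ) hR.ne').ge
  have hw' : w ∈ Metric.closedBall (0 : ℂ) R := by simpa using hw
  rw [← heq hw']
  exact (Summable.of_norm_bounded hsum fun i => hbound i w hw').hasSum

end PowerSeries

section DoubleSeries

variable {z : ℕ → ℕ → ℝ} {W : ℂ → ℂ → ℂ} {r r' R : ℝ}

theorem ofReal_norm_mul_pow {x : ℝ} (hx : 0 ≤ x) (v : ℂ) (q : ℕ) :
    ((‖(x : ℂ) * v ^ q‖ : ℝ) : ℂ) = x * (‖v‖ : ℂ) ^ q := by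
  simp [abs_of_nonneg hx]

theorem hasSum_double_swap {u v S : ℂ} :
    HasSum (fun pq : ℕ × ℕ => (z pq.1 pq.2 : ℂ) * u ^ pq.1 * v ^ pq.2) S ↔
      HasSum (fun qp : ℕ × ℕ => (z qp.2 qp.1 : ℂ) * v ^ qp.1 * u ^ qp.2) S := by
  rw [← (Equiv.prodComm ℕ ℕ).hasSum_iff]
  exact iff_of_eq (congrArg (HasSum · S) (funext fun _ => mul_right_comm _ _ _))

theorem hasSum_double_of_differentiableOn (hz : ∀ p q, 0 ≤ z p q) (hr : 0 < r)
    (h : ∀ u : ℂ, ‖u‖ < r → ∀ v : ℂ, ‖v‖ < r' →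
      HasSum (fun pq : ℕ × ℕ => (z pq.1 pq.2 : ℂ) * u ^ pq.1 * v ^ pq.2) (W u v))
    (hW : ∀ v : ℂ, ‖v‖ < r' → DifferentiableOn ℂ (W · v) (Metric.ball 0 R))
    {u : ℂ} (hu : ‖u‖ < R) {v : ℂ} (hv : ‖v‖ < r') :
    HasSum (fun pq : ℕ × ℕ => (z pq.1 pq.2 : ℂ) * u ^ pq.1 * v ^ pq.2) (W u v) := by
  have hv' : ‖(‖v‖ : ℂ)‖ < r' := by simpa using hv
  have hnear : ∀ᶠ w : ℂ in 𝓝 0, ‖w‖ < r :=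
    continuous_norm.continuousAt.eventually_lt continuousAt_const (by simpa using hr)
  refine (hasSum_of_differentiableOn_ball_of_majorant
    (c := fun pq : ℕ × ℕ => (z pq.1 pq.2 : ℂ) * v ^ pq.2) (hW v hv) (hW _ hv')
    (hnear.mono fun w hw => (h w hw v hv).congr_fun fun _ => mul_right_comm _ _ _)
    (hnear.mono fun w hw => (h w hw _ hv').congr_fun fun pq => ?_) hu).congr_fun
      fun _ => mul_right_comm _ _ _
  rw [ofReal_norm_mul_pow (hz _ _), mul_right_comm]

theorem hasSum_double_of_continuousOn (hz : ∀ p q, 0 ≤ z p q) (hR : 0 < R)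
    (h : ∀ u : ℂ, ‖u‖ < R → ∀ v : ℂ, ‖v‖ < r' →
      HasSum (fun pq : ℕ × ℕ => (z pq.1 pq.2 : ℂ) * u ^ pq.1 * v ^ pq.2) (W u v))
    (hW : ∀ v : ℂ, ‖v‖ < r' → ContinuousOn (W · v) (Metric.closedBall 0 R))
    {u : ℂ} (hu : ‖u‖ ≤ R) {v : ℂ} (hv : ‖v‖ < r') :
    HasSum (fun pq : ℕ × ℕ => (z pq.1 pq.2 : ℂ) * u ^ pq.1 * v ^ pq.2) (W u v) := by
  have hv' : ‖(‖v‖ : ℂ)‖ < r' := by simpa using hv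
  refine (hasSum_of_continuousOn_closedBall_of_majorant (e := Prod.fst)
    (c := fun pq : ℕ × ℕ => (z pq.1 pq.2 : ℂ) * v ^ pq.2) hR (hW v hv) (hW _ hv')
    (fun w hw => (h w hw v hv).congr_fun fun _ => mul_right_comm _ _ _)
    (fun w hw => (h w hw _ hv').congr_fun fun pq => ?_) hu).congr_fun
      fun _ => mul_right_comm _ _ _
  rw [ofReal_norm_mul_pow (hz _ _), mul_right_comm]

theorem hasSum_double_closedBall (hz : ∀ p q, 0 ≤ z p q) (hr : 0 < r) (hrR : r ≤ R)
    (h : ∀ u : ℂ, ‖u‖ < r → ∀ v : ℂ, ‖v‖ < r →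
      HasSum (fun pq : ℕ × ℕ => (z pq.1 pq.2 : ℂ) * u ^ pq.1 * v ^ pq.2) (W u v))
    (hleft : ∀ v : ℂ, ‖v‖ < R → DifferentiableOn ℂ (W · v) (Metric.ball 0 R))
    (hright : ∀ u : ℂ, ‖u‖ < R → DifferentiableOn ℂ (W u) (Metric.ball 0 R))
    (hcont : ∀ v : ℂ, ‖v‖ < R → ContinuousOn (W · v) (Metric.closedBall 0 R))
    {u : ℂ} (hu : ‖u‖ ≤ R) {v : ℂ} (hv : ‖v‖ < R) :
    HasSum (fun pq : ℕ × ℕ => (z pq.1 pq.2 : ℂ) * u ^ pq.1 * v ^ pq.2) (W u v) := by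
  refine hasSum_double_of_continuousOn hz (hr.trans_le hrR) (fun u hu v hv => ?_) hcont hu hv
  refine hasSum_double_swap.mpr (hasSum_double_of_differentiableOn (W := fun v u => W u v)
    (fun q p => hz p q) hr (fun v hv u hu => hasSum_double_swap.mp ?_) hright hv hu)
  exact hasSum_double_of_differentiableOn hz hr h (fun v hv => hleft v (hv.trans_le hrR)) hu hv

theorem tsum_tsum_eq_of_hasSum_double {u v S : ℂ}
    (h : HasSum (fun pq : ℕ × ℕ => (z pq.1 pq.2 : ℂ) * u ^ pq.1 * v ^ pq.2) S) :
    ∑' q, (∑' p, (z p q : ℂ) * u ^ p) * v ^ q = S := by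
  have hswap := (Equiv.prodComm ℕ ℕ).hasSum_iff.mpr h
  have := hswap.summable.tsum_prod
  rw [← hswap.tsum_eq, this]
  exact tsum_congr fun q => tsum_mul_right.symm

end DoubleSeries

section Quartic

/-- The quartic `h ↦ h³(2 + h)/3`; it is `1 - û(1 - h)/u_c`, so that inverting it inverts `û`
around its critical point `H = 1`, where `û = u_c`. -/
noncomputable def quartic (h : ℂ) : ℂ := h ^ 3 * (2 + h) / 3

theorem quartic_re (h : ℂ) : (quartic h).re =
    ((h.re ^ 3 - 3 * h.re * h.im ^ 2) * (2 + h.re)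
      - (3 * h.re ^ 2 * h.im - h.im ^ 3) * h.im) / 3 := by
  have hreal : quartic h = ((h ^ 3 * (2 + h)) / (3 : ℝ) : ℂ) := by simp [quartic]
  rw [hreal, Complex.div_ofReal_re]
  simp only [pow_succ, pow_zero, one_mul, Complex.mul_re, Complex.mul_im, Complex.add_re,
    Complex.add_im, Complex.re_ofNat, Complex.im_ofNat, zero_add]
  ring

theorem hasDerivAt_quartic (h : ℂ) : HasDerivAt quartic (2 * h ^ 2 * (3 + 2 * h) / 3) h := by
  have := (((hasDerivAt_id h).pow 3).mul ((hasDerivAt_id h).const_add 2)).div_const 3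
  refine this.congr_deriv ?_
  simp only [id_eq, Pi.pow_apply, Nat.cast_ofNat]
  ring

theorem quartic_notMem_slitPlane_of_deriv_eq_zero {h : ℂ}
    (hh : 2 * h ^ 2 * (3 + 2 * h) / 3 = 0) : quartic h ∉ Complex.slitPlane := by
  rcases eq_or_ne h 0 with rfl | h0
  · simp [quartic]
  · have hlin : 3 + 2 * h = 0 := by simpa [h0] using hh
    have hcrit : h = -3 / 2 := by linear_combination hlin / 2
    have hval : quartic h = ((-9 / 16 : ℝ) : ℂ) := by rw [hcrit, quartic]; norm_num
    rw [hval, Complex.ofReal_mem_slitPlane]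
    norm_num

theorem exists_continuousOn_quartic_rightInverse : ∃ κ : ℂ → ℂ,
    ContinuousOn κ Complex.slitPlane ∧ (∀ y ∈ Complex.slitPlane, quartic (κ y) = y) ∧ κ 1 = 1 := by
  let p : Polynomial ℂ := .C (1 / 3) * (.X ^ 3 * (2 + .X))
  have hp : (p.eval ·) = quartic := funext fun h => by
    simp only [p, quartic, Polynomial.eval_mul, Polynomial.eval_add, Polynomial.eval_pow,
      Polynomial.eval_C, Polynomial.eval_X, Polynomial.eval_ofNat]
    ring
  have hp' (h : ℂ) : p.derivative.eval h = 2 * h ^ 2 * (3 + 2 * h) / 3 := by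
    rw [← Polynomial.deriv, hp, (hasDerivAt_quartic h).deriv]
  have hone : p.eval 1 = 1 := (congrFun hp 1).trans (by norm_num [quartic])
  simpa only [fun h => congrFun hp h] using exists_continuousOn_eval_rightInverse p
    Complex.isOpen_slitPlane Complex.starConvex_one_slitPlane Complex.one_mem_slitPlane hone
    fun h hh => congrFun hp h ▸ quartic_notMem_slitPlane_of_deriv_eq_zero (hp' h ▸ hh)

/-- The inverse branch of `quartic` on the slit plane that fixes `1`. It is extended by `0`, hence
continuously at `0`. -/
noncomputable def quarticInv : ℂ → ℂ :=
  Complex.slitPlane.indicator exists_continuousOn_quartic_rightInverse.choose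

theorem eqOn_quarticInv :
    Set.EqOn quarticInv exists_continuousOn_quartic_rightInverse.choose Complex.slitPlane :=
  Set.eqOn_indicator

theorem continuousOn_quarticInv : ContinuousOn quarticInv Complex.slitPlane :=
  exists_continuousOn_quartic_rightInverse.choose_spec.1.congr eqOn_quarticInv

theorem quartic_quarticInv {y : ℂ} (hy : y ∈ Complex.slitPlane) : quartic (quarticInv y) = y := by
  rw [eqOn_quarticInv hy]
  exact exists_continuousOn_quartic_rightInverse.choose_spec.2.1 y hy

@[simp]
theorem quarticInv_one : quarticInv 1 = 1 :=
  (eqOn_quarticInv Complex.one_mem_slitPlane).trans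
    exists_continuousOn_quartic_rightInverse.choose_spec.2.2

@[simp]
theorem quarticInv_zero : quarticInv 0 = 0 :=
  Set.indicator_of_notMem Complex.zero_notMem_slitPlane _

/-- The open sector of half-angle `π/6` around the positive real axis. Products of three of its
elements have positive real part, which keeps the denominators of the parametrization away
from `0`. -/
def sector : Set ℂ := {h | 0 < h.re ∧ 3 * h.im ^ 2 < h.re ^ 2}

theorem isOpen_sector : IsOpen sector :=
  (isOpen_lt continuous_const Complex.continuous_re).inter
    (isOpen_lt (by fun_prop : Continuous fun h : ℂ => 3 * h.im ^ 2)
      (by fun_prop : Continuous fun h : ℂ => h.re ^ 2))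

theorem closure_sector_subset : closure sector ⊆ {h | 0 ≤ h.re ∧ 3 * h.im ^ 2 ≤ h.re ^ 2} :=
  closure_minimal (fun _ hh => ⟨hh.1.le, hh.2.le⟩) <|
    (isClosed_le continuous_const Complex.continuous_re).inter
      (isClosed_le (by fun_prop : Continuous fun h : ℂ => 3 * h.im ^ 2)
        (by fun_prop : Continuous fun h : ℂ => h.re ^ 2))

theorem one_mem_sector : (1 : ℂ) ∈ sector := by simp [sector]

theorem mem_sector_of_quartic_re_pos {h : ℂ} (hh : h ∈ closure sector)
    (hq : 0 < (quartic h).re) : h ∈ sector := by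
  obtain ⟨hre, him⟩ := closure_sector_subset hh
  rw [quartic_re] at hq
  refine ⟨hre.lt_of_ne' fun h0 => ?_, him.lt_of_ne fun hboundary => ?_⟩
  · have him0 : h.im = 0 := by
      have : h.im ^ 2 = 0 := by
        rw [h0] at him
        nlinarith [sq_nonneg h.im]
      simpa using this
    simp [h0, him0] at hq
  · have hval : (h.re ^ 3 - 3 * h.re * h.im ^ 2) * (2 + h.re)
        - (3 * h.re ^ 2 * h.im - h.im ^ 3) * h.im = -(8 * h.im ^ 4) := by
      linear_combination (3 * h.im ^ 2 - h.re * (2 + h.re)) * hboundary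
    have : 0 ≤ h.im ^ 4 := by positivity
    linarith

theorem quarticInv_mem_sector {y : ℂ} (hy : 0 < y.re) : quarticInv y ∈ sector := by
  have himage : IsPreconnected (quarticInv '' {y | 0 < y.re}) :=
    (convex_halfSpace_re_gt 0).isPreconnected.image _ (continuousOn_quarticInv.mono fun _ => Or.inl)
  refine himage.subset_of_closure_inter_subset isOpen_sector
    ⟨1, ⟨1, by simp, quarticInv_one⟩, one_mem_sector⟩ ?_ ⟨y, hy, rfl⟩
  rintro _ ⟨hmem, w, hw, rfl⟩
  exact mem_sector_of_quartic_re_pos hmem ((quartic_quarticInv (Or.inl hw)).symm ▸ hw)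

theorem isPreconnected_slitPlane : IsPreconnected Complex.slitPlane :=
  (Complex.starConvex_one_slitPlane.isPathConnected
    Complex.one_mem_slitPlane).isConnected.isPreconnected

theorem quarticInv_ne_zero {y : ℂ} (hy : y ∈ Complex.slitPlane) : quarticInv y ≠ 0 := fun h0 =>
  Complex.slitPlane_ne_zero hy (by rw [← quartic_quarticInv hy, h0]; simp [quartic])

theorem re_quarticInv_pos {y : ℂ} (hy : y ∈ Complex.slitPlane) : 0 < (quarticInv y).re := by
  refine (isPreconnected_slitPlane.image _ continuousOn_quarticInv).subset_of_closure_inter_subset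
    (isOpen_lt continuous_const Complex.continuous_re)
    ⟨1, ⟨1, Complex.one_mem_slitPlane, quarticInv_one⟩, by simp⟩ ?_ ⟨y, hy, rfl⟩
  rintro _ ⟨hmem, w, hw, rfl⟩
  by_contra hcon
  have hclosure : closure {h : ℂ | 0 < h.re} ⊆ {h | 0 ≤ h.re} :=
    closure_minimal (fun h hh => le_of_lt (b := h.re) hh)
      (isClosed_le continuous_const Complex.continuous_re)
  have hre : (quarticInv w).re = 0 := le_antisymm (not_lt.mp hcon) (hclosure hmem)
  have him : (quarticInv w).im ≠ 0 := fun him => quarticInv_ne_zero hw (Complex.ext hre him)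
  have hw_re : w.re = (quarticInv w).im ^ 4 / 3 := by
    conv_lhs => rw [← quartic_quarticInv hw, quartic_re, hre]
    ring
  exact hcon (quarticInv_mem_sector (hw_re ▸ by positivity)).1

theorem differentiableAt_quarticInv {y : ℂ} (hy : y ∈ Complex.slitPlane) :
    DifferentiableAt ℂ quarticInv y := by
  have hlin : 3 + 2 * quarticInv y ≠ 0 := fun h => by
    have hre := congrArg Complex.re h
    norm_num at hre
    linarith [re_quarticInv_pos hy]
  have hderiv : 2 * quarticInv y ^ 2 * (3 + 2 * quarticInv y) / 3 ≠ 0 := by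
    simp [quarticInv_ne_zero hy, hlin]
  have hnhds := Complex.isOpen_slitPlane.mem_nhds hy
  exact (HasDerivAt.of_local_left_inverse (continuousOn_quarticInv.continuousAt hnhds)
    (hasDerivAt_quartic _) hderiv
    (mem_of_superset hnhds fun _ => quartic_quarticInv)).differentiableAt

theorem norm_quarticInv_pow_three_le (y : ℂ) : ‖quarticInv y‖ ^ 3 ≤ 3 / 2 * ‖y‖ := by
  by_cases hy : y ∈ Complex.slitPlane
  · have htwo : 2 ≤ ‖2 + quarticInv y‖ := calc
      2 ≤ (2 + quarticInv y).re := by simpa using (re_quarticInv_pos hy).le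
      _ ≤ ‖2 + quarticInv y‖ := Complex.re_le_norm _
    calc ‖quarticInv y‖ ^ 3 = 3 / 2 * (‖quarticInv y‖ ^ 3 * 2 / 3) := by ring
      _ ≤ 3 / 2 * (‖quarticInv y‖ ^ 3 * ‖2 + quarticInv y‖ / 3) := by gcongr
      _ = 3 / 2 * ‖quartic (quarticInv y)‖ := by simp [quartic]
      _ = 3 / 2 * ‖y‖ := by rw [quartic_quarticInv hy]
  · simp [quarticInv, hy]

theorem continuousAt_quarticInv_zero : ContinuousAt quarticInv 0 := by
  rw [Metric.continuousAt_iff]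
  intro ε hε
  refine ⟨2 / 3 * ε ^ 3, by positivity, fun y hy => ?_⟩
  rw [dist_zero_right] at hy
  rw [quarticInv_zero, dist_zero_right]
  refine lt_of_pow_lt_pow_left₀ 3 hε.le ((norm_quarticInv_pow_three_le y).trans_lt ?_)
  linarith

theorem isBigO_quarticInv_pow_five (l : Filter ℂ) :
    (fun y => quarticInv y ^ 5) =O[l] fun y => ‖y‖ ^ ((5 : ℝ) / 3) := by
  refine .of_bound ((3 / 2 : ℝ) ^ ((5 : ℝ) / 3)) (.of_forall fun y => ?_)
  have hpow : ‖quarticInv y‖ ^ 5 = (‖quarticInv y‖ ^ 3) ^ ((5 : ℝ) / 3) := by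
    rw [← Real.rpow_natCast, ← Real.rpow_natCast, ← Real.rpow_mul (norm_nonneg _)]
    norm_num
  rw [norm_pow, hpow, Real.norm_of_nonneg (by positivity),
    ← Real.mul_rpow (by norm_num) (norm_nonneg _)]
  gcongr
  exact norm_quarticInv_pow_three_le y

theorem ofReal_add_div_ofReal_mem_slitPlane {a b : ℝ} (ha : 0 < a) (hb : 0 < b) {h : ℂ}
    (hh : 0 ≤ h.re) : (a + h) / b ∈ Complex.slitPlane := by
  left
  rw [Complex.div_ofReal_re, Complex.add_re, Complex.ofReal_re]
  positivity

theorem cpow_four_thirds_eq {y : ℂ} (hy : y ∈ Complex.slitPlane) :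
    y ^ ((4 : ℂ) / 3) = quarticInv y ^ 4 * ((2 + quarticInv y) / 3) ^ ((4 : ℂ) / 3) := by
  have hcube (w : ℂ) : (w ^ ((4 : ℂ) / 3)) ^ 3 = w ^ 4 := by
    rw [← Complex.cpow_nat_mul, ← Complex.cpow_natCast]
    norm_num
  have hmem : ∀ w ∈ Complex.slitPlane, (2 + quarticInv w) / 3 ∈ Complex.slitPlane := fun w hw => by
    exact_mod_cast ofReal_add_div_ofReal_mem_slitPlane two_pos three_pos (re_quarticInv_pos hw).le
  have hcont : ContinuousOn (fun w => quarticInv w ^ 4 * ((2 + quarticInv w) / 3) ^ ((4 : ℂ) / 3))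
      Complex.slitPlane :=
    (continuousOn_quarticInv.pow 4).mul
      (((continuousOn_quarticInv.const_add 2).div_const 3).cpow_const hmem)
  refine (eqOn_of_pow_eqOn isPreconnected_slitPlane hcont
    (continuousOn_id.cpow_const fun w hw => hw) three_pos (fun w hw => ?_) (fun w hw => ?_)
    Complex.one_mem_slitPlane ?_ hy).symm
  · calc (quarticInv w ^ 4 * ((2 + quarticInv w) / 3) ^ ((4 : ℂ) / 3)) ^ 3
        = quartic (quarticInv w) ^ 4 := by rw [mul_pow, hcube, quartic]; ring
      _ = (w ^ ((4 : ℂ) / 3)) ^ 3 := by rw [quartic_quarticInv hw, hcube]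
  · simp [Complex.cpow_eq_zero_iff, Complex.slitPlane_ne_zero hw]
  · norm_num

end Quartic

section Parametrization

theorem uc_pos : 0 < uc := by
  unfold uc tc
  positivity

theorem ofReal_uc_ne_zero : (uc : ℂ) ≠ 0 := by
  exact_mod_cast uc_pos.ne'

theorem ofReal_sqrt_seven_sq : ((Real.sqrt 7 : ℝ) : ℂ) ^ 2 = 7 := by
  rw [← Complex.ofReal_pow, Real.sq_sqrt (by norm_num)]
  norm_num

theorem nuc_sq_sub_one : nuc ^ 2 - 1 = 4 * (7 + Real.sqrt 7) := by
  have hsq := Real.sq_sqrt (show (0 : ℝ) ≤ 7 by norm_num)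
  unfold nuc
  linear_combination 4 * hsq

theorem nuc_sq_sub_one_mul_tc : ((nuc : ℂ) ^ 2 - 1) * tc = 10 / 3 * uc := by
  have hreal : (nuc ^ 2 - 1) * tc = 10 / 3 * uc := by
    rw [nuc_sq_sub_one, uc]
    ring
  simpa using congrArg Complex.ofReal hreal

theorem nuc_sq_sub_one_mul_uc_sq : ((nuc : ℂ) ^ 2 - 1) * (uc : ℂ) ^ 2 = 9 / 10 := by
  have hreal : (nuc ^ 2 - 1) * uc ^ 2 = 9 / 10 := by
    have hpos : 0 < 7 + Real.sqrt 7 := by positivity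
    have hpow : ((7 + Real.sqrt 7) ^ ((3 : ℝ) / 2)) ^ 2 = (7 + Real.sqrt 7) ^ 3 := by
      rw [← Real.rpow_natCast, ← Real.rpow_mul hpos.le, ← Real.rpow_natCast]
      norm_num
    rw [nuc_sq_sub_one, uc, tc, mul_pow, div_pow, mul_pow 8, hpow, Real.sq_sqrt (by norm_num)]
    field_simp
    norm_num
  simpa using congrArg Complex.ofReal hreal

/-- The cofactor `10 - 12 H + 6 H² - H³` of `H` in `û(H)`, in the variable `h = 1 - H`. -/
noncomputable def uhatCofactor (h : ℂ) : ℂ := 3 + 3 * h + 3 * h ^ 2 + h ^ 3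

theorem uhatCofactor_one_sub (H : ℂ) : uhatCofactor (1 - H) = 10 - 12 * H + 6 * H ^ 2 - H ^ 3 := by
  unfold uhatCofactor
  ring

theorem one_sub_quartic (h : ℂ) : 1 - quartic h = (1 - h) * uhatCofactor h / 3 := by
  unfold quartic uhatCofactor
  ring

theorem uhat_one_sub (h : ℂ) : uhat (1 - h) = uc * (1 - quartic h) := by
  unfold uhat quartic
  ring

/-- The denominator of the rational parametrization `Zhat` of `Z`. -/
noncomputable def denPoly (h k : ℂ) : ℂ := k ^ 3 + (1 + h + h ^ 2) * (k ^ 2 + k + h)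

/-- The numerator of the rational parametrization `Zhat` of `Z`. -/
noncomputable def numPoly (h k : ℂ) : ℂ :=
  (1 + h + h ^ 2 + 2 * h ^ 3 + h ^ 4) * (h + k + k ^ 2) + k ^ 3 * (1 + h + h ^ 2 + k)

/-- The rational parametrization of `Z`: the value of `Z` at `(û(1 - h), û(1 - k))`. The variables
are shifted so that the critical point is `(0, 0)`. -/
noncomputable def Zhat (h k : ℂ) : ℂ :=
  Z0hat (1 - k) + 3 / 10 * (1 - quartic h) * (Real.sqrt 7 - numPoly h k / denPoly h k)

/-- The polynomial factor common to both sides of the kernel equation; the equation determines `Z`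
only where it does not vanish. -/
noncomputable def kernelPoly (H K : ℂ) : ℂ := H * K ^ 2 + (1 - 3 * H) * K + H ^ 2

/-- The kernel of the equation that defines `Z`, at `(û(H), û(K))`. -/
noncomputable def kernel (H K : ℂ) : ℂ :=
  (nuc : ℂ) * uhat K * uhat H - uhat H ^ 2
    - ((nuc : ℂ) ^ 2 - 1) * (tc : ℂ) * uhat K * (Z0hat H + uhat H * Z1hat K)

/-- The right-hand side of the equation that defines `Z`, at `(û(H), û(K))`. -/
noncomputable def kernelRHS (H K : ℂ) : ℂ :=
  uhat H ^ 2 * (Z0hat K - Z0hat H)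
    + ((nuc : ℂ) ^ 2 - 1) * uhat H * uhat K * (uhat H ^ 2 - (tc : ℂ) * Z0hat H * Z1hat K)

theorem uhat_mul_Z1hat_one_sub {k : ℂ} (hk : uhatCofactor k ≠ 0) :
    uhat (1 - k) * Z1hat (1 - k) =
      1 / 10 * (1 - k) * (uhatCofactor k * (Real.sqrt 7 - k) - 3 * (2 + k + k ^ 2)) := by
  have huc := ofReal_uc_ne_zero
  rw [uhat, Z1hat, ← uhatCofactor_one_sub, sub_sub_cancel]
  field_simp
  ring

theorem kernel_one_sub {h k : ℂ} (hk : uhatCofactor k ≠ 0) :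
    kernel (1 - h) (1 - k) =
      -((uc : ℂ) ^ 2 / 9) * uhatCofactor h * kernelPoly (1 - h) (1 - k) * denPoly h k := by
  have hν : (nuc : ℂ) = 1 + 2 * (Real.sqrt 7 : ℝ) := by simp [nuc]
  calc kernel (1 - h) (1 - k)
      = nuc * uhat (1 - k) * uhat (1 - h) - uhat (1 - h) ^ 2
        - 10 / 3 * uc * (uhat (1 - k) * Z0hat (1 - h)
          + uhat (1 - h) * (uhat (1 - k) * Z1hat (1 - k))) := by
        rw [kernel, nuc_sq_sub_one_mul_tc]
        ring
    _ = _ := by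
        rw [uhat_mul_Z1hat_one_sub hk, hν]
        simp only [uhat, Z0hat, uhatCofactor, kernelPoly, denPoly]
        ring

theorem kernelRHS_one_sub {h k : ℂ} (hk : uhatCofactor k ≠ 0) :
    kernelRHS (1 - h) (1 - k) =
      (uc : ℂ) ^ 2 / 90 * uhatCofactor h ^ 2 * (1 - h) * kernelPoly (1 - h) (1 - k)
        * (numPoly h k - Real.sqrt 7 * denPoly h k) := by
  calc kernelRHS (1 - h) (1 - k)
      = uhat (1 - h) ^ 2 * (Z0hat (1 - k) - Z0hat (1 - h))
        + ((nuc : ℂ) ^ 2 - 1) * uc ^ 2 * uc ^ 2 * (1 - quartic h) ^ 3 * (1 - quartic k)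
        - ((nuc : ℂ) ^ 2 - 1) * tc * uhat (1 - h) * Z0hat (1 - h)
          * (uhat (1 - k) * Z1hat (1 - k)) := by
        rw [kernelRHS, uhat_one_sub, uhat_one_sub]
        ring
    _ = _ := by
        rw [nuc_sq_sub_one_mul_tc, nuc_sq_sub_one_mul_uc_sq, uhat_mul_Z1hat_one_sub hk]
        simp only [uhat, Z0hat, uhatCofactor, kernelPoly, denPoly, numPoly, quartic]
        linear_combination -(3 / 10) * (uc : ℂ) ^ 2 * (1 - h ^ 3 * (2 + h) / 3) ^ 2 *
          (1 - k ^ 3 * (2 + k) / 3) * ofReal_sqrt_seven_sq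

theorem kernelPoly_mul_sub_Zhat_eq_zero {h k Z : ℂ} (hh : uhatCofactor h ≠ 0)
    (hk : uhatCofactor k ≠ 0) (hden : denPoly h k ≠ 0)
    (heq : kernel (1 - h) (1 - k) * (Z - Z0hat (1 - k)) = kernelRHS (1 - h) (1 - k)) :
    kernelPoly (1 - h) (1 - k) * (Z - Zhat h k) = 0 := by
  have huc := ofReal_uc_ne_zero
  have hnonzero : (uc : ℂ) ^ 2 / 9 * uhatCofactor h * denPoly h k ≠ 0 := by simp [huc, hh, hden]
  refine (mul_eq_zero_iff_left hnonzero).mp ?_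
  have hcancel : denPoly h k * (numPoly h k / denPoly h k) = numPoly h k :=
    mul_div_cancel₀ _ hden
  rw [kernel_one_sub hk, kernelRHS_one_sub hk] at heq
  rw [Zhat, one_sub_quartic]
  linear_combination -heq + (uc : ℂ) ^ 2 / 90 * uhatCofactor h ^ 2 * (1 - h)
    * kernelPoly (1 - h) (1 - k) * hcancel

end Parametrization

section Denominators

theorem inv_mem_sector {h : ℂ} (hh : h ∈ sector) : h⁻¹ ∈ sector := by
  obtain ⟨hre, him⟩ := hh
  have hnorm : 0 < Complex.normSq h := Complex.normSq_pos.mpr fun h0 => by simp [h0] at hre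
  refine ⟨by rw [Complex.inv_re]; positivity, ?_⟩
  rw [Complex.inv_re, Complex.inv_im, div_pow, div_pow, neg_sq, mul_div_assoc']
  gcongr

theorem three_mul_im_mul_im_lt {h k : ℂ} (hh : h ∈ sector) (hk : k ∈ sector) :
    3 * (h.im * k.im) < h.re * k.re := by
  obtain ⟨hre, him⟩ := hh
  obtain ⟨kre, kim⟩ := hk
  refine lt_of_pow_lt_pow_left₀ 2 (by positivity) ?_
  calc (3 * (h.im * k.im)) ^ 2 = 3 * h.im ^ 2 * (3 * k.im ^ 2) := by ring
    _ < h.re ^ 2 * k.re ^ 2 := mul_lt_mul'' him kim (by positivity) (by positivity)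
    _ = (h.re * k.re) ^ 2 := by ring

theorem re_mul_mul_pos {h k l : ℂ} (hh : h ∈ sector) (hk : k ∈ sector) (hl : l ∈ sector) :
    0 < (h * k * l).re := by
  simp only [Complex.mul_re, Complex.mul_im]
  nlinarith [mul_lt_mul_of_pos_left (three_mul_im_mul_im_lt hh hk) hl.1,
    mul_lt_mul_of_pos_left (three_mul_im_mul_im_lt hh hl) hk.1,
    mul_lt_mul_of_pos_left (three_mul_im_mul_im_lt hk hl) hh.1]

theorem ne_zero_of_mem_sector {h : ℂ} (hh : h ∈ sector) : h ≠ 0 := fun h0 => by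
  simpa [h0] using hh.1

theorem uhatCofactor_ne_zero {h : ℂ} (hh : h ∈ sector) : uhatCofactor h ≠ 0 := fun h0 => by
  have h1 := one_mem_sector
  have hlinear := re_mul_mul_pos h1 h1 hh
  have hsquare := re_mul_mul_pos h1 hh hh
  have hcube := re_mul_mul_pos hh hh hh
  have hsum : 3 + 3 * (1 * 1 * h).re + 3 * (1 * h * h).re + (h * h * h).re = 0 := by
    rw [← Complex.zero_re, ← h0]
    simp [uhatCofactor, pow_succ]
  linarith

theorem one_add_add_sq_ne_zero {h : ℂ} (hh : h ∈ insert 0 sector) : 1 + h + h ^ 2 ≠ 0 := by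
  rcases hh with rfl | hh
  · simp
  intro h0
  have h1 := one_mem_sector
  have hlinear := re_mul_mul_pos h1 h1 hh
  have hsquare := re_mul_mul_pos h1 hh hh
  have hsum : 1 + (1 * 1 * h).re + (1 * h * h).re = 0 := by
    rw [← Complex.zero_re, ← h0]
    simp [pow_succ]
  linarith

theorem denPoly_zero_left (k : ℂ) : denPoly 0 k = k * (1 + k + k ^ 2) := by
  unfold denPoly
  ring

theorem denPoly_zero_right (h : ℂ) : denPoly h 0 = (1 + h + h ^ 2) * h := by
  unfold denPoly
  ring

theorem denPoly_ne_zero_of_mem_sector {h k : ℂ} (hh : h ∈ sector) (hk : k ∈ sector) :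
    denPoly h k ≠ 0 := by
  have h0 := ne_zero_of_mem_sector hh
  have k0 := ne_zero_of_mem_sector hk
  -- Dividing by `h k` leaves ten monomials, each a product of three elements of the sector.
  have hexpand : denPoly h k * (h⁻¹ * k⁻¹) =
      k * k * h⁻¹ + 1 * k * h⁻¹ + 1 * 1 * h⁻¹ + 1 * 1 * k⁻¹ + 1 * 1 * k +
      1 * 1 * 1 + 1 * h * k⁻¹ + 1 * h * k + 1 * 1 * h + h * h * k⁻¹ := by
    unfold denPoly
    field_simp
    ring
  have hpos : 0 < (denPoly h k * (h⁻¹ * k⁻¹)).re := by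
    have h1 := one_mem_sector
    have hh' := inv_mem_sector hh
    have hk' := inv_mem_sector hk
    simp only [hexpand, Complex.add_re]
    refine add_pos (add_pos (add_pos (add_pos (add_pos (add_pos (add_pos (add_pos (add_pos
      ?_ ?_) ?_) ?_) ?_) ?_) ?_) ?_) ?_) ?_ <;>
      apply re_mul_mul_pos <;> assumption
  intro hden
  simp [hden] at hpos

theorem denPoly_ne_zero {h k : ℂ} (hh : h ∈ insert 0 sector) (hk : k ∈ sector) :
    denPoly h k ≠ 0 := by
  rcases hh with rfl | hh
  · rw [denPoly_zero_left]
    exact mul_ne_zero (ne_zero_of_mem_sector hk) (one_add_add_sq_ne_zero (Or.inr hk))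
  · exact denPoly_ne_zero_of_mem_sector hh hk

theorem continuous_denPoly (h : ℂ) : Continuous (denPoly h) := by
  unfold denPoly
  fun_prop

theorem eventually_one_add_add_sq_ne_zero : ∀ᶠ k : ℂ in 𝓝 0, 1 + k + k ^ 2 ≠ 0 :=
  (by fun_prop : Continuous fun k : ℂ => 1 + k + k ^ 2).continuousAt.eventually_ne (by simp)

theorem denPoly_zero_right_ne_zero {h : ℂ} (hh : h ∈ sector) : denPoly h 0 ≠ 0 := by
  rw [denPoly_zero_right]
  exact mul_ne_zero (one_add_add_sq_ne_zero (Or.inr hh)) (ne_zero_of_mem_sector hh)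

theorem eventually_denPoly_ne_zero {h : ℂ} (hh : h ∈ insert 0 sector) :
    ∀ᶠ k : ℂ in 𝓝[≠] 0, denPoly h k ≠ 0 := by
  rcases hh with rfl | hh
  · filter_upwards [eventually_one_add_add_sq_ne_zero.filter_mono nhdsWithin_le_nhds,
      self_mem_nhdsWithin] with k hk h0
    rw [denPoly_zero_left]
    exact mul_ne_zero h0 hk
  · exact ((continuous_denPoly h).continuousAt.eventually_ne
      (denPoly_zero_right_ne_zero hh)).filter_mono nhdsWithin_le_nhds

theorem differentiableAt_uncurry_Zhat {h k : ℂ} (hden : denPoly h k ≠ 0) :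
    DifferentiableAt ℂ (Function.uncurry Zhat) (h, k) := by
  unfold denPoly at hden
  unfold Function.uncurry Zhat Z0hat quartic numPoly denPoly
  fun_prop (disch := exact hden)

theorem differentiableAt_Ahat_one_sub {h : ℂ} (hh : 1 + h + h ^ 2 ≠ 0) :
    DifferentiableAt ℂ (fun h => Ahat (1 - h)) h := by
  have hden : (3 - 3 * (1 - h) + (1 - h) ^ 2) ^ 2 ≠ 0 := by
    convert! pow_ne_zero 2 hh using 2
    ring
  unfold Ahat
  fun_prop (disch := exact hden)

end Denominators

section SlitDisk

variable {x ε : ℝ} {u v : ℂ}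

theorem isOpen_slitDisk (x ε : ℝ) : IsOpen (slitDisk x ε) :=
  Metric.isOpen_ball.sdiff (isCompact_Icc.image Complex.continuous_ofReal).isClosed

theorem re_one_sub_div_ofReal (v : ℂ) (x : ℝ) : (1 - v / x).re = 1 - v.re / x := by
  rw [Complex.sub_re, Complex.div_ofReal_re, Complex.one_re]

theorem im_one_sub_div_ofReal (v : ℂ) (x : ℝ) : (1 - v / x).im = -(v.im / x) := by
  rw [Complex.sub_im, Complex.div_ofReal_im, Complex.one_im, zero_sub]

theorem re_one_sub_div_ofReal_pos (hx : 0 < x) (hu : ‖u‖ ≤ x) (hne : u ≠ x) :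
    0 < (1 - u / x).re := by
  have hlt : u.re < x := by
    refine lt_of_le_of_ne ((Complex.re_le_norm u).trans hu) fun hre => hne ?_
    have hnorm : u.re = ‖u‖ := le_antisymm (Complex.re_le_norm u) (hre ▸ hu)
    rw [← hre, hnorm]
    exact Complex.eq_coe_norm_of_nonneg (Complex.re_eq_norm.mp hnorm)
  rwa [re_one_sub_div_ofReal, sub_pos, div_lt_one hx]

theorem one_sub_div_ofReal_mem_slitPlane (hx : 0 < x) (hv : v ∈ slitDisk x ε) :
    1 - v / x ∈ Complex.slitPlane := by
  by_contra hcon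
  rw [Complex.mem_slitPlane_iff_not_le_zero, not_not, Complex.le_def, re_one_sub_div_ofReal,
    im_one_sub_div_ofReal, Complex.zero_re, Complex.zero_im, sub_nonpos, one_le_div hx,
    neg_eq_zero, div_eq_zero_iff] at hcon
  have hnorm : ‖v‖ < x + ε := by simpa using hv.1
  exact hv.2 ⟨v.re, ⟨hcon.1, (Complex.re_le_norm v).trans hnorm.le⟩,
    Complex.ext rfl (hcon.2.resolve_right hx.ne').symm⟩

theorem sq_mul_norm_one_sub_div_sq_le (hx : 0 < x) (hv : ‖v‖ < x + ε)
    (hre : (1 - v / x).re ≤ 0) : x ^ 2 * ‖1 - v / x‖ ^ 2 ≤ 2 * x * ε + ε ^ 2 := by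
  have hle : x ≤ v.re := by rwa [re_one_sub_div_ofReal, sub_nonpos, one_le_div hx] at hre
  have hdist : x ^ 2 * ‖1 - v / x‖ ^ 2 = (x - v.re) ^ 2 + v.im ^ 2 := by
    rw [Complex.sq_norm, Complex.normSq_apply, re_one_sub_div_ofReal, im_one_sub_div_ofReal]
    field_simp
  have hsq : v.re ^ 2 + v.im ^ 2 < (x + ε) ^ 2 := by
    have : ‖v‖ ^ 2 = v.re ^ 2 + v.im ^ 2 := by
      rw [Complex.sq_norm, Complex.normSq_apply]
      ring
    rw [← this]
    gcongr
  rw [hdist]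
  nlinarith

theorem exists_slitDisk_re_pos_or_norm_lt (hx : 0 < x) {η : ℝ} (hη : 0 < η) :
    ∃ ε > 0, ∀ v ∈ slitDisk x ε, 0 < (1 - v / x).re ∨ ‖1 - v / x‖ < η := by
  refine ⟨min x (x * η ^ 2 / 4), by positivity, fun v hv => or_iff_not_imp_left.mpr fun hre => ?_⟩
  set ε := min x (x * η ^ 2 / 4)
  have hε : 0 < ε := by positivity
  have hεx : ε ≤ x := min_le_left _ _
  have hεη : ε ≤ x * η ^ 2 / 4 := min_le_right _ _
  have hbound := sq_mul_norm_one_sub_div_sq_le hx (by simpa using hv.1) (not_lt.mp hre)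
  have hsq : x ^ 2 * ‖1 - v / x‖ ^ 2 < x ^ 2 * η ^ 2 := by nlinarith
  exact lt_of_pow_lt_pow_left₀ 2 hη.le (lt_of_mul_lt_mul_left hsq (by positivity))

end SlitDisk

section Coordinate

variable {u v : ℂ}

/-- The local coordinate `1 - û⁻¹(v)` at the critical point: `û (1 - coord v) = v`. -/
noncomputable def coord (v : ℂ) : ℂ := quarticInv (1 - v / uc)

theorem one_sub_uc_div_uc : 1 - (uc : ℂ) / uc = 0 := by
  rw [div_self ofReal_uc_ne_zero, sub_self]

theorem re_one_sub_div_uc_pos (hv : ‖v‖ < uc) : 0 < (1 - v / uc).re :=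
  re_one_sub_div_ofReal_pos uc_pos hv.le fun h => by simp [h, abs_of_pos uc_pos] at hv

theorem one_sub_div_uc_mem_slitPlane (hv : ‖v‖ < uc) : 1 - v / uc ∈ Complex.slitPlane :=
  Or.inl (re_one_sub_div_uc_pos hv)

theorem coord_zero : coord 0 = 1 := by simp [coord]

theorem coord_uc : coord uc = 0 := by rw [coord, one_sub_uc_div_uc, quarticInv_zero]

theorem uhat_one_sub_coord (hv : ‖v‖ < uc) : uhat (1 - coord v) = v := by
  rw [uhat_one_sub, coord, quartic_quarticInv (one_sub_div_uc_mem_slitPlane hv), sub_sub_cancel,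
    mul_div_cancel₀ _ ofReal_uc_ne_zero]

theorem coord_mem_sector (hv : ‖v‖ < uc) : coord v ∈ sector :=
  quarticInv_mem_sector (re_one_sub_div_uc_pos hv)

theorem coord_mem_insert_sector (hu : ‖u‖ ≤ uc) : coord u ∈ insert 0 sector := by
  rcases eq_or_ne u uc with rfl | hne
  · rw [coord_uc]
    exact Set.mem_insert _ _
  · exact Or.inr (quarticInv_mem_sector (re_one_sub_div_ofReal_pos uc_pos hu hne))

theorem differentiableAt_coord (hv : 1 - v / uc ∈ Complex.slitPlane) :
    DifferentiableAt ℂ coord v :=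
  DifferentiableAt.comp (f := fun v : ℂ => 1 - v / uc) v (differentiableAt_quarticInv hv)
    (by fun_prop)

theorem differentiableOn_coord : DifferentiableOn ℂ coord (Metric.ball 0 uc) := fun _ hv =>
  (differentiableAt_coord (one_sub_div_uc_mem_slitPlane
    (mem_ball_zero_iff.mp hv))).differentiableWithinAt

theorem continuousAt_coord_uc : ContinuousAt coord uc :=
  ContinuousAt.comp (f := fun v : ℂ => 1 - v / uc)
    (by rw [one_sub_uc_div_uc]; exact continuousAt_quarticInv_zero) (by fun_prop)

theorem continuousOn_coord : ContinuousOn coord (Metric.closedBall 0 uc) := fun u hu => by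
  rcases eq_or_ne u uc with rfl | hne
  · exact continuousAt_coord_uc.continuousWithinAt
  · exact (differentiableAt_coord (Or.inl (re_one_sub_div_ofReal_pos uc_pos
      (mem_closedBall_zero_iff.mp hu) hne))).continuousAt.continuousWithinAt

theorem eventually_norm_one_sub_coord_lt {ρ : ℝ} (hρ : 0 < ρ) :
    ∀ᶠ v : ℂ in 𝓝 0, ‖1 - coord v‖ < ρ := by
  have hcont : ContinuousAt (fun v : ℂ => ‖1 - coord v‖) 0 :=
    ((differentiableAt_coord (v := 0) (by simp)).continuousAt.const_sub 1).norm
  exact hcont.eventually_lt continuousAt_const (by simpa [coord_zero] using hρ)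

theorem tendsto_coord_slitDisk (ε : ℝ) :
    Tendsto coord (𝓝[slitDisk uc ε] (uc : ℂ)) (𝓝[≠] 0) := by
  refine tendsto_nhdsWithin_iff.mpr
    ⟨coord_uc ▸ continuousAt_coord_uc.tendsto.mono_left nhdsWithin_le_nhds, ?_⟩
  filter_upwards [self_mem_nhdsWithin] with v hv
    using quarticInv_ne_zero (one_sub_div_ofReal_mem_slitPlane uc_pos hv)

theorem differentiableAt_Zhat_coord {h : ℂ} (hv : 1 - v / uc ∈ Complex.slitPlane)
    (hden : denPoly h (coord v) ≠ 0) : DifferentiableAt ℂ (fun v => Zhat h (coord v)) v :=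
  DifferentiableAt.comp v (g := Function.uncurry Zhat) (f := fun v => (h, coord v))
    (differentiableAt_uncurry_Zhat hden)
    ((differentiableAt_const h).prodMk (differentiableAt_coord hv))

theorem differentiableOn_Zhat_coord_right (hu : ‖u‖ < uc) :
    DifferentiableOn ℂ (fun v => Zhat (coord u) (coord v)) (Metric.ball 0 uc) := fun v hv => by
  have hv : ‖v‖ < uc := mem_ball_zero_iff.mp hv
  exact (differentiableAt_Zhat_coord (one_sub_div_uc_mem_slitPlane hv)
    (denPoly_ne_zero_of_mem_sector (coord_mem_sector hu)
      (coord_mem_sector hv))).differentiableWithinAt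

theorem differentiableOn_Zhat_coord_left (hv : ‖v‖ < uc) :
    DifferentiableOn ℂ (fun u => Zhat (coord u) (coord v)) (Metric.ball 0 uc) := fun u hu =>
  DifferentiableAt.comp_differentiableWithinAt (g := Function.uncurry Zhat)
    (f := fun u => (coord u, coord v)) u
    (differentiableAt_uncurry_Zhat (denPoly_ne_zero_of_mem_sector
      (coord_mem_sector (mem_ball_zero_iff.mp hu)) (coord_mem_sector hv)))
    ((differentiableOn_coord u hu).prodMk (differentiableWithinAt_const _))

theorem continuousOn_Zhat_coord_left (hv : ‖v‖ < uc) :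
    ContinuousOn (fun u => Zhat (coord u) (coord v)) (Metric.closedBall 0 uc) := fun u hu =>
  ContinuousAt.comp_continuousWithinAt (g := Function.uncurry Zhat)
    (f := fun u => (coord u, coord v))
    (differentiableAt_uncurry_Zhat (denPoly_ne_zero
      (coord_mem_insert_sector (mem_closedBall_zero_iff.mp hu)) (coord_mem_sector hv))).continuousAt
    ((continuousOn_coord u hu).prodMk continuousWithinAt_const)

theorem exists_slitDisk_denPoly_coord_ne_zero {h : ℂ} (hh : h ∈ insert 0 sector) :
    ∃ ε > 0, ∀ v ∈ slitDisk uc ε, denPoly h (coord v) ≠ 0 := by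
  have hnear : ∀ᶠ y in 𝓝 0, quarticInv y ≠ 0 → denPoly h (quarticInv y) ≠ 0 :=
    continuousAt_quarticInv_zero.eventually (by
      rw [quarticInv_zero]
      exact eventually_nhdsWithin_iff.mp (eventually_denPoly_ne_zero hh))
  obtain ⟨η, hη, hsmall⟩ := Metric.eventually_nhds_iff.mp hnear
  obtain ⟨ε, hε, hcases⟩ := exists_slitDisk_re_pos_or_norm_lt uc_pos hη
  refine ⟨ε, hε, fun v hv => ?_⟩
  rcases hcases v hv with hre | hnorm
  · exact denPoly_ne_zero hh (quarticInv_mem_sector hre)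
  · exact hsmall (by rwa [dist_zero_right])
      (quarticInv_ne_zero (one_sub_div_ofReal_mem_slitPlane uc_pos hv))

theorem exists_kernelPoly_coord_ne_zero (H : ℂ) {r : ℝ} (hr : 0 < r) (hruc : r ≤ uc) :
    ∃ v ∈ Metric.ball (0 : ℂ) r, kernelPoly H (1 - coord v) ≠ 0 := by
  rcases eq_or_ne H 0 with rfl | hH
  · have hnorm : ‖((r / 2 : ℝ) : ℂ)‖ < r := by
      rw [Complex.norm_of_nonneg (half_pos hr).le]
      exact half_lt_self hr
    refine ⟨(r / 2 : ℝ), mem_ball_zero_iff.mpr hnorm, fun hzero => ?_⟩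
    have hK : 1 - coord (r / 2 : ℝ) = 0 := by simpa [kernelPoly] using hzero
    have huhat := uhat_one_sub_coord (hnorm.trans_le hruc)
    rw [hK, uhat, mul_zero, zero_mul] at huhat
    exact (half_pos hr).ne (mod_cast huhat)
  · exact ⟨0, Metric.mem_ball_self hr, by simpa [kernelPoly, coord_zero] using hH⟩

variable {ρ : ℝ}

theorem exists_hasSum_kernelPoly_mul_eq_zero {z : ℕ → ℕ → ℝ}
    (hZ : ∀ H K : ℂ, ‖H‖ < ρ → ‖K‖ < ρ → ∃ ZHK : ℂ,
      HasSum (fun pq : ℕ × ℕ => (z pq.1 pq.2 : ℂ) * uhat H ^ pq.1 * uhat K ^ pq.2) ZHK ∧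
        kernel H K * (ZHK - Z0hat K) = kernelRHS H K)
    (hu : ‖u‖ < uc) (huρ : ‖1 - coord u‖ < ρ) (hv : ‖v‖ < uc) (hvρ : ‖1 - coord v‖ < ρ) :
    ∃ S, HasSum (fun pq : ℕ × ℕ => (z pq.1 pq.2 : ℂ) * u ^ pq.1 * v ^ pq.2) S ∧
      kernelPoly (1 - coord u) (1 - coord v) * (S - Zhat (coord u) (coord v)) = 0 := by
  obtain ⟨S, hsum, heq⟩ := hZ _ _ huρ hvρ
  rw [uhat_one_sub_coord hu, uhat_one_sub_coord hv] at hsum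
  have hus := coord_mem_sector hu
  have hvs := coord_mem_sector hv
  exact ⟨S, hsum, kernelPoly_mul_sub_Zhat_eq_zero (uhatCofactor_ne_zero hus)
    (uhatCofactor_ne_zero hvs) (denPoly_ne_zero_of_mem_sector hus hvs) heq⟩

theorem exists_hasSum_Zhat {z : ℕ → ℕ → ℝ} (hρ : 0 < ρ)
    (hZ : ∀ H K : ℂ, ‖H‖ < ρ → ‖K‖ < ρ → ∃ ZHK : ℂ,
      HasSum (fun pq : ℕ × ℕ => (z pq.1 pq.2 : ℂ) * uhat H ^ pq.1 * uhat K ^ pq.2) ZHK ∧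
        kernel H K * (ZHK - Z0hat K) = kernelRHS H K) :
    ∃ r > 0, r ≤ uc ∧ ∀ u : ℂ, ‖u‖ < r → ∀ v : ℂ, ‖v‖ < r →
      HasSum (fun pq : ℕ × ℕ => (z pq.1 pq.2 : ℂ) * u ^ pq.1 * v ^ pq.2)
        (Zhat (coord u) (coord v)) := by
  obtain ⟨r₀, hr₀, hsmall⟩ :=
    Metric.eventually_nhds_iff_ball.mp (eventually_norm_one_sub_coord_lt hρ)
  obtain ⟨r, hr, hrr₀, hruc⟩ : ∃ r > 0, r ≤ r₀ ∧ r ≤ uc :=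
    ⟨min r₀ uc, lt_min hr₀ uc_pos, min_le_left _ _, min_le_right _ _⟩
  refine ⟨r, hr, hruc, fun u hu => ?_⟩
  have hsol (v : ℂ) (hv : ‖v‖ < r) := exists_hasSum_kernelPoly_mul_eq_zero hZ
    (hu.trans_le hruc) (hsmall u (by simpa using hu.trans_le hrr₀))
    (hv.trans_le hruc) (hsmall v (by simpa using hv.trans_le hrr₀))
  choose! S hS hker using hsol
  have hball : Metric.ball (0 : ℂ) r ⊆ Metric.ball 0 uc := Metric.ball_subset_ball hruc
  have hSdiff : DifferentiableOn ℂ S (Metric.ball 0 r) :=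
    differentiableOn_ball_of_hasSum_prod
      (c := fun qp : ℕ × ℕ => (z qp.2 qp.1 : ℂ) * u ^ qp.2) fun v hv =>
        (hasSum_double_swap.mp (hS v hv)).congr_fun fun _ => mul_right_comm _ _ _
  have hKdiff : DifferentiableOn ℂ (fun v => kernelPoly (1 - coord u) (1 - coord v))
      (Metric.ball 0 r) := by
    have hcoord := differentiableOn_coord.mono hball
    unfold kernelPoly
    fun_prop
  have hfactor := AnalyticOnNhd.eq_zero_or_eq_zero_of_mul_eq_zero
    (hKdiff.analyticOnNhd Metric.isOpen_ball)
    ((hSdiff.sub ((differentiableOn_Zhat_coord_right (hu.trans_le hruc)).mono hball)).analyticOnNhd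
      Metric.isOpen_ball)
    (fun v hv => hker v (mem_ball_zero_iff.mp hv))
    (convex_ball (0 : ℂ) r).isPreconnected
  obtain ⟨v₀, hv₀, hne⟩ := exists_kernelPoly_coord_ne_zero (1 - coord u) hr hruc
  intro v hv
  have hzero := hfactor.resolve_left (fun h => hne (h v₀ hv₀)) v (mem_ball_zero_iff.mpr hv)
  have heq : S v = Zhat (coord u) (coord v) := sub_eq_zero.mp hzero
  exact heq ▸ hS v hv

theorem differentiableOn_Ahat_coord :
    DifferentiableOn ℂ (fun u => Ahat (1 - coord u)) (Metric.ball 0 uc) := fun u hu => by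
  have hu : ‖u‖ < uc := mem_ball_zero_iff.mp hu
  exact (DifferentiableAt.comp (g := fun h => Ahat (1 - h)) u
    (differentiableAt_Ahat_one_sub (one_add_add_sq_ne_zero (Or.inr (coord_mem_sector hu))))
    (differentiableAt_coord (one_sub_div_uc_mem_slitPlane hu))).differentiableWithinAt

theorem continuousOn_Ahat_coord :
    ContinuousOn (fun u => Ahat (1 - coord u)) (Metric.closedBall 0 uc) := fun u hu =>
  ContinuousAt.comp_continuousWithinAt (g := fun h => Ahat (1 - h))
    (differentiableAt_Ahat_one_sub (one_add_add_sq_ne_zero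
      (coord_mem_insert_sector (mem_closedBall_zero_iff.mp hu)))).continuousAt
    (continuousOn_coord u hu)

theorem tsum_eq_Ahat_coord {a : ℕ → ℝ} (hρ : 0 < ρ) (ha : ∀ p, 0 ≤ a p)
    (hA : ∀ H : ℂ, ‖H‖ < ρ → HasSum (fun p : ℕ => (a p : ℂ) * uhat H ^ p) (Ahat H))
    (hu : ‖u‖ ≤ uc) : ∑' p, (a p : ℂ) * u ^ p = Ahat (1 - coord u) := by
  have hnear : ∀ᶠ w : ℂ in 𝓝 0, HasSum (fun p => (a p : ℂ) * w ^ p) (Ahat (1 - coord w)) := by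
    filter_upwards [eventually_norm_one_sub_coord_lt hρ, Metric.ball_mem_nhds 0 uc_pos]
      with w hw hwuc
    simpa only [uhat_one_sub_coord (mem_ball_zero_iff.mp hwuc)] using hA _ hw
  have hball (w : ℂ) (hw : ‖w‖ < uc) : HasSum (fun p => (a p : ℂ) * w ^ p) (Ahat (1 - coord w)) :=
    hasSum_of_differentiableOn_ball differentiableOn_Ahat_coord hnear hw
  refine (hasSum_of_continuousOn_closedBall_of_majorant (e := id) uc_pos continuousOn_Ahat_coord
    continuousOn_Ahat_coord hball (fun w hw => ?_) hu).tsum_eq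
  simpa only [Complex.norm_of_nonneg (ha _), id_eq] using hball w hw

end Coordinate

section Expansion

variable {h : ℂ}

/-- The constant term of `Zhat h`, expanded along `1, quartic k, k⁴` at `k = 0`. -/
noncomputable def constCoeff (h : ℂ) : ℂ :=
  3 / 10 * (2 + Real.sqrt 7) + 3 / 10 * (1 - quartic h) *
    (Real.sqrt 7 - (1 + h + h ^ 2 + 2 * h ^ 3 + h ^ 4) / (1 + h + h ^ 2))

/-- The coefficient of `quartic k` in the expansion of `Zhat h` along `1, quartic k, k⁴`. -/
noncomputable def quarticCoeff (h : ℂ) : ℂ :=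
  -(3 / 10) * (2 + Real.sqrt 7) +
    9 / 20 * (1 - (1 - quartic h) * (1 + 2 * h) / (1 + h + h ^ 2) ^ 2)

/-- The coefficient of `k⁴` in the expansion of `Zhat h` along `1, quartic k, k⁴`. -/
noncomputable def powFourCoeff (h : ℂ) : ℂ :=
  3 / 20 * (4 + 2 * h + 3 * h ^ 2) / (1 + h + h ^ 2) ^ 2

/-- The numerator of the remainder in the expansion of `numPoly h / denPoly h` at `0`. -/
noncomputable def remPoly (h k : ℂ) : ℂ :=
  3 * (1 + h + h ^ 2) * h + h * (h ^ 2 + 2) * k - (1 - h) * k ^ 2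

theorem numPoly_div_denPoly_eq {k : ℂ} (ha : 1 + h + h ^ 2 ≠ 0) (hden : denPoly h k ≠ 0) :
    numPoly h k / denPoly h k = (1 + h + h ^ 2 + 2 * h ^ 3 + h ^ 4) / (1 + h + h ^ 2) +
      k ^ 3 * ((1 + 2 * h) + (h - 1) * k) / (1 + h + h ^ 2) ^ 2 -
      k ^ 5 / (1 + h + h ^ 2) ^ 2 * (remPoly h k / denPoly h k) := by
  field_simp
  unfold numPoly denPoly remPoly
  ring

theorem Zhat_eq {k : ℂ} (ha : 1 + h + h ^ 2 ≠ 0) (hden : denPoly h k ≠ 0) :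
    Zhat h k = constCoeff h + quarticCoeff h * quartic k + powFourCoeff h * k ^ 4
      + k ^ 5 * (3 / 10 * (1 + k / 3) + 3 / 10 * (1 - quartic h) / (1 + h + h ^ 2) ^ 2 *
        (remPoly h k / denPoly h k)) := by
  rw [Zhat, numPoly_div_denPoly_eq ha hden, Z0hat, constCoeff, quarticCoeff, powFourCoeff]
  generalize remPoly h k / denPoly h k = R
  unfold quartic
  field_simp
  ring

theorem isBigO_remPoly_div_denPoly (hh : h ∈ insert 0 sector) :
    (fun k => remPoly h k / denPoly h k) =O[𝓝[≠] 0] fun _ => (1 : ℂ) := by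
  rcases hh with rfl | hh
  · have hcont : ContinuousAt (fun k : ℂ => -k / (1 + k + k ^ 2)) 0 :=
      ContinuousAt.div (by fun_prop) (by fun_prop) (by simp)
    refine ((hcont.tendsto.isBigO_one ℂ).mono nhdsWithin_le_nhds).congr' ?_ EventuallyEq.rfl
    filter_upwards [self_mem_nhdsWithin] with k hk
    calc -k / (1 + k + k ^ 2) = k * -k / (k * (1 + k + k ^ 2)) := (mul_div_mul_left _ _ hk).symm
      _ = remPoly 0 k / denPoly 0 k := by rw [denPoly_zero_left, remPoly]; ring
  · have hcont : ContinuousAt (fun k => remPoly h k / denPoly h k) 0 :=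
      ContinuousAt.div (by unfold remPoly; fun_prop) (continuous_denPoly h).continuousAt
        (denPoly_zero_right_ne_zero hh)
    exact (hcont.tendsto.isBigO_one ℂ).mono nhdsWithin_le_nhds

theorem isBigO_Zhat_sub (hh : h ∈ insert 0 sector) :
    (fun k => Zhat h k - (constCoeff h + quarticCoeff h * quartic k + powFourCoeff h * k ^ 4))
      =O[𝓝[≠] 0] fun k => k ^ 5 := by
  have hcont : ContinuousAt (fun k : ℂ => 3 / 10 * (1 + k / 3)) 0 := by fun_prop
  have hrem := ((hcont.tendsto.isBigO_one ℂ).mono nhdsWithin_le_nhds).add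
    ((isBigO_remPoly_div_denPoly hh).const_mul_left
      (3 / 10 * (1 - quartic h) / (1 + h + h ^ 2) ^ 2))
  refine ((Asymptotics.isBigO_refl (fun k : ℂ => k ^ 5) (𝓝[≠] 0)).mul hrem).congr' ?_
    (.of_forall fun k => mul_one _)
  filter_upwards [eventually_denPoly_ne_zero hh] with k hk
  rw [Zhat_eq (one_add_add_sq_ne_zero hh) hk, add_sub_cancel_left]

theorem differentiableAt_two_add_div_three_cpow :
    DifferentiableAt ℂ (fun k : ℂ => ((2 + k) / 3) ^ ((4 : ℂ) / 3)) 0 :=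
  DifferentiableAt.cpow_const (f := fun k : ℂ => (2 + k) / 3) (by fun_prop) <| by
    simpa using ofReal_add_div_ofReal_mem_slitPlane two_pos three_pos (h := 0) le_rfl

theorem Ahat_one_sub_mul_cpow (h : ℂ) :
    Ahat (1 - h) * (2 / 3 : ℂ) ^ ((4 : ℂ) / 3) = powFourCoeff h := by
  have hcpow : (2 / 3 : ℂ) ^ ((4 : ℂ) / 3) = ((2 / 3 : ℝ) ^ ((4 : ℝ) / 3) : ℝ) := by
    rw [Complex.ofReal_cpow (by norm_num)]
    simp
  have hconst : ((3 : ℝ) / 2) ^ ((7 : ℝ) / 3) * (2 / 3) ^ ((4 : ℝ) / 3) = 3 / 2 := by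
    rw [show (7 : ℝ) / 3 = 1 + 4 / 3 by norm_num, Real.rpow_add (by norm_num), Real.rpow_one,
      mul_assoc, ← Real.mul_rpow (by norm_num) (by norm_num)]
    norm_num
  have hconst' := congrArg Complex.ofReal hconst
  push_cast at hconst'
  rw [hcpow, Ahat, powFourCoeff, show 3 - 3 * (1 - h) + (1 - h) ^ 2 = 1 + h + h ^ 2 by ring]
  linear_combination (1 / 10 * (4 + 2 * h + 3 * h ^ 2) / (1 + h + h ^ 2) ^ 2) * hconst'

theorem isBigO_Zhat_sub_cpow (hh : h ∈ insert 0 sector) :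
    (fun k => Zhat h k - (constCoeff h + quarticCoeff h * quartic k
      + Ahat (1 - h) * (k ^ 4 * ((2 + k) / 3) ^ ((4 : ℂ) / 3)))) =O[𝓝[≠] 0] fun k => k ^ 5 := by
  have hcpow := differentiableAt_two_add_div_three_cpow.isBigO_sub.neg_left
  simp only [neg_sub, add_zero, sub_zero] at hcpow
  have hpow := (((Asymptotics.isBigO_refl (fun k : ℂ => k ^ 4) (𝓝 0)).mul hcpow).const_mul_left
    (Ahat (1 - h))).mono (nhdsWithin_le_nhds (s := {0}ᶜ))
  refine ((isBigO_Zhat_sub hh).add hpow).congr_left fun k => ?_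
  rw [← Ahat_one_sub_mul_cpow]
  ring

theorem isBigO_Zhat_coord_sub {u : ℂ} (hu : ‖u‖ ≤ uc) (ε : ℝ) :
    (fun v => Zhat (coord u) (coord v) - (constCoeff (coord u)
      - -quarticCoeff (coord u) / uc * (uc - v)
      + Ahat (1 - coord u) * (1 - v / uc) ^ ((4 : ℂ) / 3)))
      =O[𝓝[slitDisk uc ε] (uc : ℂ)] fun v => ‖1 - v / uc‖ ^ ((5 : ℝ) / 3) := by
  have hrem := (isBigO_quarticInv_pow_five ⊤).comp_tendsto (k := fun v : ℂ => 1 - v / uc)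
    (l' := 𝓝[slitDisk uc ε] (uc : ℂ)) tendsto_top
  refine (((isBigO_Zhat_sub_cpow (coord_mem_insert_sector hu)).comp_tendsto
    (tendsto_coord_slitDisk ε)).trans hrem).congr' ?_ EventuallyEq.rfl
  filter_upwards [self_mem_nhdsWithin] with v hv
  have hslit := one_sub_div_ofReal_mem_slitPlane uc_pos hv
  have hlin : -quarticCoeff (coord u) / uc * (uc - v) =
      -(quarticCoeff (coord u) * quartic (coord v)) := by
    have huc := ofReal_uc_ne_zero
    rw [coord, coord, quartic_quarticInv hslit]
    field_simp
  rw [Function.comp_apply, hlin, cpow_four_thirds_eq hslit, ← coord, sub_neg_eq_add]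

theorem exists_slitDisk_analyticAt_Zhat_coord {u : ℂ} (hu : ‖u‖ ≤ uc) :
    ∃ ε > 0, ∀ w ∈ slitDisk uc ε, AnalyticAt ℂ (fun v => Zhat (coord u) (coord v)) w := by
  obtain ⟨ε, hε, hden⟩ := exists_slitDisk_denPoly_coord_ne_zero (coord_mem_insert_sector hu)
  have hdiff : DifferentiableOn ℂ (fun v => Zhat (coord u) (coord v)) (slitDisk uc ε) :=
    fun v hv => (differentiableAt_Zhat_coord (one_sub_div_ofReal_mem_slitPlane uc_pos hv)
      (hden v hv)).differentiableWithinAt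
  exact ⟨ε, hε, fun w hw => hdiff.analyticAt ((isOpen_slitDisk uc ε).mem_nhds hw)⟩

end Expansion

/-- for each `|u| ≤ u_c`, the function `Z_u(v) = Σ_q (Σ_p z_{p,q} u^p) v^q`
extends analytically to a slit disk at `u_c`, and there are constants `α(u), β(u)` with
`Z_u(v) = α(u) − β(u)(u_c − v) + A(u)(1 − v/u_c)^{4/3} + O((1 − v/u_c)^{5/3})`
as `v → u_c` within the slit disk (principal branch powers). -/
theorem statement7
    (ρ : ℝ) (hρ : 0 < ρ)
    (z : ℕ → ℕ → ℝ) (hz_nonneg : ∀ p q, 0 ≤ z p q)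
    -- `z p 0` are the Taylor coefficients of `Z₀ = Ẑ₀ ∘ û⁻¹` at `0`
    (hz0 : ∀ H : ℂ, ‖H‖ < ρ →
      HasSum (fun p : ℕ => (z p 0 : ℂ) * uhat H ^ p) (Z0hat H))
    -- `z p q` are the Taylor coefficients at `(0,0)` of the solution `Z(u,v)` of the
    -- algebraic equation, expressed through the parametrization `u = û(H)`, `v = û(K)`
    (hZ : ∀ H K : ℂ, ‖H‖ < ρ → ‖K‖ < ρ → ∃ ZHK : ℂ,
      HasSum (fun pq : ℕ × ℕ => (z pq.1 pq.2 : ℂ) * uhat H ^ pq.1 * uhat K ^ pq.2) ZHK ∧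
      ((nuc : ℂ) * uhat K * uhat H - uhat H ^ 2
          - ((nuc : ℂ) ^ 2 - 1) * (tc : ℂ) * uhat K * (Z0hat H + uhat H * Z1hat K))
          * (ZHK - Z0hat K)
        = uhat H ^ 2 * (Z0hat K - Z0hat H)
          + ((nuc : ℂ) ^ 2 - 1) * uhat H * uhat K * (uhat H ^ 2 - (tc : ℂ) * Z0hat H * Z1hat K))
    (a : ℕ → ℝ) (ha_pos : ∀ p, 0 < a p)
    -- `a p` are the Taylor coefficients of `A = Â ∘ û⁻¹` at `0`
    (hA : ∀ H : ℂ, ‖H‖ < ρ →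
      HasSum (fun p : ℕ => (a p : ℂ) * uhat H ^ p) (Ahat H))
    :
    ∀ u : ℂ, ‖u‖ ≤ uc →
      ∃ (g : ℂ → ℂ) (ε : ℝ), 0 < ε ∧
        (∀ w ∈ slitDisk uc ε, AnalyticAt ℂ g w) ∧
        (∀ v : ℂ, ‖v‖ < uc →
          g v = ∑' q : ℕ, (∑' p : ℕ, (z p q : ℂ) * u ^ p) * v ^ q) ∧
        ∃ α β : ℂ, Asymptotics.IsBigO (nhdsWithin ((uc : ℝ) : ℂ) (slitDisk uc ε))
          (fun v : ℂ => g v - (α - β * (((uc : ℝ) : ℂ) - v)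
            + (∑' p : ℕ, (a p : ℂ) * u ^ p) * (1 - v / ((uc : ℝ) : ℂ)) ^ ((4 : ℂ)/3)))
          (fun v : ℂ => ‖1 - v / ((uc : ℝ) : ℂ)‖ ^ ((5:ℝ)/3)) := by
  obtain ⟨r, hr, hruc, hlocal⟩ := exists_hasSum_Zhat hρ hZ
  intro u hu
  obtain ⟨ε, hε, han⟩ := exists_slitDisk_analyticAt_Zhat_coord hu
  refine ⟨fun v => Zhat (coord u) (coord v), ε, hε, han, fun v hv => ?_,
    constCoeff (coord u), -quarticCoeff (coord u) / uc, ?_⟩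
  · have hsum := hasSum_double_closedBall (W := fun u v => Zhat (coord u) (coord v)) hz_nonneg hr
      hruc hlocal (fun _ => differentiableOn_Zhat_coord_left)
      (fun _ => differentiableOn_Zhat_coord_right) (fun _ => continuousOn_Zhat_coord_left) hu hv
    exact (tsum_tsum_eq_of_hasSum_double hsum).symm
  · rw [tsum_eq_Ahat_coord hρ (fun p => (ha_pos p).le) hA hu]
    exact isBigO_Zhat_coord_sub hu ε
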